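/- Let P be a polytope, P' a subpolytope of P, and Σ a subdivision of P such that the tight-spans T(Σ) and T(Σ|_{P'}) are isomorphic (as posets). If Σ' is a subdivision of P coarsening Σ, then T(Σ') and T(Σ'|_{P'}) are isomorphic. -/

import Mathlib

open scoped Classical

section Subdivision

variable {E : Type*} [AddCommGroup E] [Module ℝ E]

/-- A polytope: the convex hull of a finite set of points. -/
def IsPolytope (P : Set E) : Prop := ∃ s : Finset E, P = convexHull ℝ (s : Set E)

/-- `F` is a face of `C`: a convex extreme subset. -/
def IsFaceOf (F C : Set E) : Prop := IsExtreme ℝ C F ∧ Convex ℝ F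

/-- A polytopal subdivision of a polytope `P`: a finite collection of nonempty polytopes
(cells), closed under taking (nonempty) faces, covering `P`, such that any two cells meet
in a common (possibly empty) face, and such that all vertices of cells are vertices of `P`. -/
structure IsSubdivision (P : Set E) (S : Set (Set E)) : Prop where
  finite : S.Finite
  nonempty_cell : ∀ C ∈ S, C.Nonempty
  poly : ∀ C ∈ S, IsPolytope C
  face_closed : ∀ C ∈ S, ∀ F, IsFaceOf F C → F.Nonempty → F ∈ S
  cover : ⋃₀ S = P
  inter_face : ∀ C ∈ S, ∀ D ∈ S, IsFaceOf (C ∩ D) C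
  vertices : ∀ C ∈ S, ∀ x ∈ Set.extremePoints ℝ C, x ∈ Set.extremePoints ℝ P

/-- A maximal cell of a collection of cells. -/
def MaximalCell (S : Set (Set E)) (C : Set E) : Prop :=
  C ∈ S ∧ ∀ D ∈ S, C ⊆ D → D = C

/-- The (relative) boundary of a polytope: the union of its proper faces. -/
def relBoundary (P : Set E) : Set E := ⋃₀ {F | IsFaceOf F P ∧ F ≠ P}

/-- The restriction `Σ|_{P'} = {S ∩ P' : S ∈ Σ}` of a subdivision to a subpolytope. -/
def restrictSubdiv (S : Set (Set E)) (P' : Set E) : Set (Set E) := (fun C => C ∩ P') '' S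

/-- `P'` is a subpolytope of `P`: the convex hull of a subset of the vertices of `P`. -/
def IsSubpolytope (P' P : Set E) : Prop :=
  ∃ W : Set E, W ⊆ Set.extremePoints ℝ P ∧ P' = convexHull ℝ W

/-- The tight-spans of `(P, S)` and `(P', S')` are isomorphic as posets: there is a
bijection between the interior cells (those not contained in the boundary) which is an
isomorphism for the partial order by reverse inclusion. -/
def TightSpanIso (P : Set E) (S : Set (Set E)) (P' : Set E) (S' : Set (Set E)) : Prop :=
  ∃ e : {C : Set E // C ∈ S ∧ ¬ C ⊆ relBoundary P} ≃
        {C : Set E // C ∈ S' ∧ ¬ C ⊆ relBoundary P'},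
    ∀ C D, C.1 ⊆ D.1 ↔ (e C).1 ⊆ (e D).1

/-- `S'` coarsens `S`: every cell of `S` is contained in some cell of `S'`. -/
def Coarsens (S S' : Set (Set E)) : Prop := ∀ C ∈ S, ∃ D ∈ S', C ⊆ D

/-- The trivial subdivision of a polytope: its collection of nonempty faces. -/
def trivialSubdiv (P : Set E) : Set (Set E) := {F | IsFaceOf F P ∧ F.Nonempty}

/-- A coarsest (non-trivial) subdivision: a non-trivial subdivision whose only proper
coarsening is the trivial subdivision. -/
def IsCoarsest (P : Set E) (S : Set (Set E)) : Prop :=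
  IsSubdivision P S ∧ S ≠ trivialSubdiv P ∧
    ∀ S', IsSubdivision P S' → Coarsens S S' → S' ≠ S → S' = trivialSubdiv P

end Subdivision

/-- The relative interior of a convex set, in algebraic form: the points from which every segment
of the set can be prolonged inside the set. -/
def relCore {E : Type*} [AddCommGroup E] [Module ℝ E] (C : Set E) : Set E :=
  {x | x ∈ C ∧ ∀ y ∈ C, ∃ δ : ℝ, 0 < δ ∧ x + δ • (x - y) ∈ C}

/-- The smallest face of a convex set containing a given point. -/
def minFace {E : Type*} [AddCommGroup E] [Module ℝ E] (x : E) (C : Set E) : Set E :=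
  {y | y ∈ C ∧ ∃ δ : ℝ, 0 < δ ∧ x + δ • (x - y) ∈ C}

section ConvexFaces

variable {E : Type*} [AddCommGroup E] [Module ℝ E] {C D F P : Set E} {x y : E}

theorem mem_openSegment_of_add_smul_sub (x y : E) {δ : ℝ} (hδ : 0 < δ) :
    x ∈ openSegment ℝ y (x + δ • (x - y)) := by
  refine ⟨δ / (1 + δ), 1 / (1 + δ), by positivity, by positivity, by field_simp; ring, ?_⟩
  match_scalars <;> field_simp
  ring

theorem mem_openSegment_add_smul_sub (x y : E) {t : ℝ} (h0 : 0 < t) (h1 : t < 1) :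
    y + t • (x - y) ∈ openSegment ℝ x y :=
  ⟨t, 1 - t, h0, by linarith, by ring, by module⟩

theorem Convex.add_smul_sub_mem_of_mem (hC : Convex ℝ C) (hx : x ∈ C) (hy : y ∈ C) {t : ℝ}
    (h0 : 0 ≤ t) (h1 : t ≤ 1) : y + t • (x - y) ∈ C := by
  have := hC hx hy h0 (show 0 ≤ 1 - t by linarith) (by ring)
  convert this using 1
  module

theorem mem_minFace_self (hx : x ∈ C) : x ∈ minFace x C :=
  ⟨hx, 1, one_pos, by simpa using hx⟩

theorem minFace_subset : minFace x C ⊆ C := fun _ h => h.1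

theorem isFaceOf_minFace (hC : Convex ℝ C) (hx : x ∈ C) : IsFaceOf (minFace x C) C := by
  refine ⟨⟨minFace_subset, ?_⟩, ?_⟩
  · rintro a ha b hb y ⟨-, δ, hδ, hz⟩ ⟨s, t, hs, ht, hst, rfl⟩
    refine ⟨ha, δ * s / (1 + δ * t), by positivity, ?_⟩
    have h := hC hb hz (show 0 ≤ δ * t / (1 + δ * t) by positivity)
      (show 0 ≤ 1 / (1 + δ * t) by positivity) (by field_simp; ring)
    convert h using 1
    obtain rfl : s = 1 - t := by linarith
    match_scalars <;> field_simp <;> ring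
  · rintro y ⟨hy, δ, hδ, hyδ⟩ z ⟨hz, η, hη, hzη⟩ a b ha hb hab
    refine ⟨hC hy hz ha hb hab, min δ η, lt_min hδ hη, ?_⟩
    have shrink : ∀ {u : E} {θ : ℝ}, 0 < θ → min δ η ≤ θ → x + θ • (x - u) ∈ C →
        x + min δ η • (x - u) ∈ C := by
      intro u θ hθ hle hu
      have h := hC.add_smul_sub_mem_of_mem hu hx (t := min δ η / θ)
        (div_nonneg (lt_min hδ hη).le hθ.le) ((div_le_one hθ).2 hle)
      convert h using 1
      match_scalars <;> field_simp
      ring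
    have h := hC (shrink hδ (min_le_left _ _) hyδ) (shrink hη (min_le_right _ _) hzη) ha hb hab
    convert h using 1
    obtain rfl : a = 1 - b := by linarith
    module

theorem mem_relCore_minFace (hx : x ∈ C) : x ∈ relCore (minFace x C) := by
  refine ⟨mem_minFace_self hx, ?_⟩
  rintro y ⟨hy, δ, hδ, hz⟩
  refine ⟨δ, hδ, hz, δ⁻¹, by positivity, ?_⟩
  convert hy using 1
  match_scalars <;> field_simp
  ring

theorem subset_of_mem_relCore (hF : IsExtreme ℝ D F) (hCD : C ⊆ D) (hx : x ∈ relCore C)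
    (hxF : x ∈ F) : C ⊆ F := by
  intro y hy
  obtain ⟨δ, hδ, hz⟩ := hx.2 y hy
  exact hF.2 (hCD hy) (hCD hz) hxF (mem_openSegment_of_add_smul_sub x y hδ)

theorem mem_relCore_of_subset_minFace (hx : x ∈ C) (h : C ⊆ minFace x C) : x ∈ relCore C :=
  ⟨hx, fun _ hy => (h hy).2⟩

theorem mem_relCore_iff_notMem_relBoundary (hP : Convex ℝ P) (hx : x ∈ P) :
    x ∈ relCore P ↔ x ∉ relBoundary P := by
  constructor
  · rintro h ⟨F, ⟨hF, hne⟩, hxF⟩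
    exact hne (hF.1.1.antisymm (subset_of_mem_relCore hF.1 subset_rfl h hxF))
  · intro h
    by_contra hc
    refine h ⟨minFace x P, ⟨isFaceOf_minFace hP hx, fun he => hc ?_⟩, mem_minFace_self hx⟩
    exact mem_relCore_of_subset_minFace hx he.ge

theorem not_subset_relBoundary_iff (hP : Convex ℝ P) (hCP : C ⊆ P) :
    ¬ C ⊆ relBoundary P ↔ (C ∩ relCore P).Nonempty := by
  rw [Set.not_subset]
  exact exists_congr fun x => and_congr_right fun hx =>
    (mem_relCore_iff_notMem_relBoundary hP (hCP hx)).symm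

theorem add_smul_sub_mem_relCore (hP : Convex ℝ P) (hx : x ∈ relCore P) (hy : y ∈ P) {t : ℝ}
    (h0 : 0 < t) (h1 : t ≤ 1) : y + t • (x - y) ∈ relCore P := by
  rcases h1.eq_or_lt with rfl | h1
  · simpa using hx
  have hw := hP.add_smul_sub_mem_of_mem hx.1 hy h0.le h1.le
  have hF := isFaceOf_minFace hP hw
  exact mem_relCore_of_subset_minFace hw <| subset_of_mem_relCore hF.1 subset_rfl hx <|
    hF.1.2 hx.1 hy (mem_minFace_self hw) (mem_openSegment_add_smul_sub x y h0 h1)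

end ConvexFaces

section PolytopeClosed

variable {E : Type*} [AddCommGroup E] [Module ℝ E] {C : Set E}

theorem IsPolytope.convex (hC : IsPolytope C) : Convex ℝ C := by
  obtain ⟨s, rfl⟩ := hC
  exact convex_convexHull ℝ _

theorem isClosed_setOf_linearMap_eq {V : Type*} [NormedAddCommGroup V] [NormedSpace ℝ V]
    [FiniteDimensional ℝ V] (L : V →ₗ[ℝ] E) (c : E) : IsClosed {v | L v = c} := by
  by_cases h : ∃ v₀, L v₀ = c
  · obtain ⟨v₀, rfl⟩ := h
    have hk : IsClosed (LinearMap.ker L : Set V) := Submodule.closed_of_finiteDimensional _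
    convert hk.preimage (continuous_id.sub (continuous_const (y := v₀))) using 1
    ext v
    simp [sub_eq_zero]
  · convert isClosed_empty
    ext v
    simpa using fun hv => h ⟨v, hv⟩

/-- The trace of a polytope on a plane is closed, although the ambient space has no topology. -/
theorem IsPolytope.isClosed_plane_preimage (hC : IsPolytope C) (c u v : E) :
    IsClosed {p : ℝ × ℝ | c + p.1 • u + p.2 • v ∈ C} := by
  obtain ⟨s, rfl⟩ := hC
  let L : ((ℝ × ℝ) × (s → ℝ)) →ₗ[ℝ] E :=
    (Fintype.linearCombination ℝ (fun i : s => (i : E))).comp (LinearMap.snd ℝ _ _) -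
      ((LinearMap.toSpanSingleton ℝ E u).comp (LinearMap.fst ℝ ℝ ℝ) +
        (LinearMap.toSpanSingleton ℝ E v).comp (LinearMap.snd ℝ ℝ ℝ)).comp (LinearMap.fst ℝ _ _)
  have hcl : IsClosed {z : (ℝ × ℝ) × stdSimplex ℝ s | L (z.1, z.2) = c} :=
    (isClosed_setOf_linearMap_eq L c).preimage (by fun_prop)
  convert isClosedMap_fst_of_compactSpace _ hcl using 1
  ext p
  have hL : ∀ w : s → ℝ, L (p, w) = c ↔ ∑ i, w i • (i : E) = c + p.1 • u + p.2 • v := by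
    intro w
    simp only [L, LinearMap.sub_apply, LinearMap.comp_apply, LinearMap.snd_apply,
      LinearMap.fst_apply, LinearMap.add_apply, LinearMap.toSpanSingleton_apply,
      Fintype.linearCombination_apply]
    rw [sub_eq_iff_eq_add, add_assoc]
  simp only [Set.mem_ofPred_eq, Finset.mem_convexHull', Set.mem_image, Prod.exists,
    exists_and_right, exists_eq_right]
  constructor
  · rintro ⟨w, h0, h1, hw⟩
    refine ⟨⟨fun i => w i, fun i => h0 i i.2, ?_⟩, ?_⟩
    · rw [← h1, ← Finset.sum_coe_sort s w]
    · rw [hL, ← hw, ← Finset.sum_coe_sort s (fun y => w y • y)]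
      rfl
  · rintro ⟨⟨w, hw⟩, h⟩
    rw [hL] at h
    refine ⟨fun y => if hy : y ∈ s then w ⟨y, hy⟩ else 0, fun y hy => ?_, ?_, ?_⟩
    · simpa [hy] using hw.1 ⟨y, hy⟩
    · rw [← Finset.sum_coe_sort]
      simpa using hw.2
    · rw [← h, ← Finset.sum_coe_sort]
      simp only [Subtype.coe_eta, Finset.coe_mem, dite_true]
      rfl

theorem isClosed_plane_preimage_sUnion {T : Set (Set E)} (hT : T.Finite)
    (hpoly : ∀ C ∈ T, IsPolytope C) (c u v : E) :
    IsClosed {p : ℝ × ℝ | c + p.1 • u + p.2 • v ∈ ⋃₀ T} := by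
  have h := hT.isClosed_biUnion fun C hC => (hpoly C hC).isClosed_plane_preimage c u v
  convert h using 1
  ext p
  simp

/-- A finite union of polytopes that meets every segment from `q + b • v` to `x`, for `b`
positive and small, also meets the segment from `q` to `x`. -/
theorem exists_mem_sUnion_of_forall_pos {T : Set (Set E)} (hT : T.Finite)
    (hpoly : ∀ C ∈ T, IsPolytope C) (q x v : E) {β : ℝ} (hβ : 0 < β)
    (h : ∀ b, 0 < b → b ≤ β → ∃ t : ℝ, 0 ≤ t ∧ t ≤ 1 ∧
      q + t • (x - q) + ((1 - t) * b) • v ∈ ⋃₀ T) :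
    ∃ t : ℝ, 0 ≤ t ∧ t ≤ 1 ∧ q + t • (x - q) ∈ ⋃₀ T := by
  let Z : Set (ℝ × ℝ) := (Set.Icc 0 1 ×ˢ Set.Icc 0 β) ∩
    {p | q + p.1 • (x - q) + ((1 - p.1) * p.2) • v ∈ ⋃₀ T}
  have hcl : IsClosed {p : ℝ × ℝ | q + p.1 • (x - q) + ((1 - p.1) * p.2) • v ∈ ⋃₀ T} :=
    (isClosed_plane_preimage_sUnion hT hpoly q (x - q) v).preimage
      (f := fun p : ℝ × ℝ => (p.1, (1 - p.1) * p.2)) (by fun_prop)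
  have hZ : IsCompact Z := (isCompact_Icc.prod isCompact_Icc).inter_right hcl
  have hsub : Set.Ioc 0 β ⊆ Prod.snd '' Z := by
    rintro b ⟨hb0, hb1⟩
    obtain ⟨t, ht0, ht1, ht⟩ := h b hb0 hb1
    exact ⟨(t, b), ⟨⟨⟨ht0, ht1⟩, hb0.le, hb1⟩, ht⟩, rfl⟩
  have h0 : (0 : ℝ) ∈ Prod.snd '' Z := by
    refine closure_minimal hsub (hZ.image continuous_snd).isClosed ?_
    rw [closure_Ioc hβ.ne]
    exact ⟨le_rfl, hβ.le⟩
  obtain ⟨⟨t, b⟩, ⟨⟨⟨ht0, ht1⟩, -⟩, ht⟩, rfl⟩ := h0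
  exact ⟨t, ht0, ht1, by simpa using ht⟩

theorem mem_sUnion_of_forall_pos {T : Set (Set E)} (hT : T.Finite)
    (hpoly : ∀ C ∈ T, IsPolytope C) (q x : E)
    (h : ∀ t : ℝ, 0 < t → t ≤ 1 → q + t • (x - q) ∈ ⋃₀ T) : q ∈ ⋃₀ T := by
  obtain ⟨t, -, -, ht⟩ := exists_mem_sUnion_of_forall_pos hT hpoly q q (x - q) one_pos
    fun b hb0 hb1 => ⟨0, le_rfl, zero_le_one, by simpa using h b hb0 hb1⟩
  simpa using ht

/-- A segment that starts by running inside a polytope and ends outside of it leaves it through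
a point of its relative boundary. -/
theorem IsPolytope.exists_exit_point (hC : IsPolytope C) {x y : E} (hx : x ∈ C) (hy : y ∉ C)
    {t₀ : ℝ} (ht₀ : 0 < t₀) (hmem : x + t₀ • (y - x) ∈ C) :
    ∃ t : ℝ, 0 < t ∧ t < 1 ∧ x + t • (y - x) ∈ C ∧ x + t • (y - x) ∉ relCore C := by
  have hcl : IsClosed {t : ℝ | x + t • (y - x) ∈ C} := by
    have h := (hC.isClosed_plane_preimage x (y - x) 0).preimage
      (f := fun t : ℝ => (t, (0 : ℝ))) (by fun_prop)
    simpa [Set.preimage] using h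
  have bound : ∀ t : ℝ, 0 ≤ t → x + t • (y - x) ∈ C → t < 1 := by
    intro t _ htC
    by_contra! h1
    refine hy ?_
    have h := hC.convex.add_smul_sub_mem_of_mem htC hx (t := t⁻¹) (by positivity)
      (inv_le_one_of_one_le₀ h1)
    convert h using 1
    have : t ≠ 0 := by positivity
    match_scalars <;> field_simp
    ring
  obtain ⟨t, ⟨⟨ht0, -⟩, htC⟩, hmax⟩ := (isCompact_Icc.inter_right hcl).exists_isGreatest
    (s := Set.Icc 0 1 ∩ _) ⟨t₀, ⟨ht₀.le, (bound t₀ ht₀.le hmem).le⟩, hmem⟩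
  have htpos : 0 < t := ht₀.trans_le (hmax ⟨⟨ht₀.le, (bound t₀ ht₀.le hmem).le⟩, hmem⟩)
  refine ⟨t, htpos, bound t ht0 htC, htC, fun hcore => ?_⟩
  obtain ⟨δ, hδ, hz⟩ := hcore.2 x hx
  have hz' : x + (t + δ * t) • (y - x) ∈ C := by
    convert hz using 1
    module
  have hnn : 0 ≤ t + δ * t := by positivity
  have := hmax ⟨⟨hnn, (bound _ hnn hz').le⟩, hz'⟩
  nlinarith [mul_pos hδ htpos]

end PolytopeClosed

section Subdivisions

variable {E : Type*} [AddCommGroup E] [Module ℝ E] {P P' : Set E} {S S' : Set (Set E)}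
  {A C C₀ D R : Set E} {q x : E}

theorem IsSubdivision.subset (hS : IsSubdivision P S) (hC : C ∈ S) : C ⊆ P :=
  hS.cover ▸ Set.subset_sUnion_of_mem hC

theorem IsSubdivision.minFace_mem (hS : IsSubdivision P S) (hC : C ∈ S) (hx : x ∈ C) :
    minFace x C ∈ S :=
  hS.face_closed C hC _ (isFaceOf_minFace (hS.poly C hC).convex hx) ⟨x, mem_minFace_self hx⟩

/-- A convex subset of a cell has a point that lies only in those cells which contain the whole
subset. -/
theorem IsSubdivision.exists_generic_point (hS : IsSubdivision P S) (hC : C ∈ S)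
    (hA : Convex ℝ A) (hAC : A ⊆ C) (hR : Convex ℝ R) (hAR : A ⊆ R)
    (hne : (A ∩ relCore R).Nonempty) :
    ∃ q ∈ A ∩ relCore R, ∀ D ∈ S, q ∈ D → A ⊆ D := by
  suffices ∀ T : Set (Set E), T.Finite → T ⊆ S →
      ∃ q ∈ A ∩ relCore R, ∀ D ∈ T, q ∈ D → A ⊆ D from this S hS.finite subset_rfl
  intro T hT
  induction T, hT using Set.Finite.induction_on with
  | empty => exact fun _ => hne.imp fun q hq => ⟨hq, by simp⟩
  | @insert D T _ _ ih =>
    intro hTS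
    obtain ⟨q, ⟨hqA, hqR⟩, hq⟩ := ih ((Set.subset_insert _ _).trans hTS)
    by_cases hAD : A ⊆ D
    · refine ⟨q, ⟨hqA, hqR⟩, ?_⟩
      rintro G (rfl | hG) hqG
      exacts [hAD, hq G hG hqG]
    obtain ⟨y, hyA, hyD⟩ := Set.not_subset.1 hAD
    have hseg : y + (1 / 2 : ℝ) • (q - y) ∈ openSegment ℝ q y :=
      mem_openSegment_add_smul_sub q y (by norm_num) (by norm_num)
    have hmA := hA.add_smul_sub_mem_of_mem hqA hyA (t := 1 / 2) (by norm_num) (by norm_num)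
    refine ⟨y + (1 / 2 : ℝ) • (q - y), ⟨hmA, ?_⟩, ?_⟩
    · exact add_smul_sub_mem_relCore hR hqR (hAR hyA) (by norm_num) (by norm_num)
    · rintro G (rfl | hG) hmG
      · have hface := hS.inter_face C hC G (hTS (Set.mem_insert _ _))
        rw [openSegment_symm] at hseg
        exact absurd (hface.1.2 (hAC hyA) (hAC hqA) ⟨hAC hmA, hmG⟩ hseg).2 hyD
      · have hface := hS.inter_face C hC G (hTS (Set.mem_insert_of_mem _ hG))
        exact hq G hG (hface.1.2 (hAC hqA) (hAC hyA) ⟨hAC hmA, hmG⟩ hseg).2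

/-- If `q` is a relative interior point of `P'` and `C` is minimal among the interior cells that
contain `q`, then the trace of `C` on `P'` lies in every cell that contains `q`. -/
theorem IsSubdivision.inter_subset_of_minimal (hS : IsSubdivision P S) (hP : Convex ℝ P)
    (hP'P : P' ⊆ P) (hC₀ : C₀ ∈ S) (hqC₀ : q ∈ C₀) (hqP' : q ∈ relCore P') (hC : C ∈ S)
    (hqC : q ∈ C) (hint : (C ∩ relCore P).Nonempty)
    (hmin : ∀ D ∈ S, D ⊆ C → q ∈ D → (D ∩ relCore P).Nonempty → D = C) :
    C ∩ P' ⊆ C₀ := by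
  rintro y ⟨hyC, hyP'⟩
  by_contra hyC₀
  have hCpoly := hS.poly C hC
  have hface := hS.inter_face C hC C₀ hC₀
  have hout : ∀ b : ℝ, 0 < b → q + b • (q - y) ∉ C := fun b hb h =>
    hyC₀ (hface.1.2 hyC h ⟨hqC, hqC₀⟩ (mem_openSegment_of_add_smul_sub q y hb)).2
  obtain ⟨x, ⟨hxC, hxP⟩, hx⟩ :=
    hS.exists_generic_point hC hCpoly.convex subset_rfl hP (hS.subset hC) hint
  have hxcore : x ∈ relCore C := mem_relCore_of_subset_minFace hxC
    (hx _ (hS.minFace_mem hC hxC) (mem_minFace_self hxC))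
  obtain ⟨β, hβ, hβP'⟩ := hqP'.2 y hyP'
  let T : Set (Set E) := {D | D ∈ S ∧ D ⊆ C ∧ D ≠ C ∧ (D ∩ relCore P).Nonempty}
  obtain ⟨t, ht0, ht1, D, ⟨hDS, hDC, hne, hDint⟩, hD⟩ :
      ∃ t : ℝ, 0 ≤ t ∧ t ≤ 1 ∧ q + t • (x - q) ∈ ⋃₀ T := by
    refine exists_mem_sUnion_of_forall_pos (hS.finite.subset fun D hD => hD.1)
      (fun D hD => hS.poly D hD.1) q x (q - y) hβ fun b hb0 hbβ => ?_
    have hbP : q + b • (q - y) ∈ P := by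
      have h := hP.add_smul_sub_mem_of_mem (hP'P hβP') (hP'P hqP'.1) (t := b / β)
        (by positivity) ((div_le_one hβ).2 hbβ)
      convert h using 1
      match_scalars <;> field_simp
      ring
    obtain ⟨δ, hδ, hδC⟩ := hxcore.2 y hyC
    obtain ⟨t, ht0, ht1, hwC, hw⟩ := hCpoly.exists_exit_point hxC (hout b hb0)
        (t₀ := δ / (b + δ + b * δ)) (by positivity) (by
      have h := hCpoly.convex hδC hqC (show 0 ≤ b / (b + δ + b * δ) by positivity)
        (show 0 ≤ (δ + b * δ) / (b + δ + b * δ) by positivity) (by field_simp; ring)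
      convert h using 1
      match_scalars <;> field_simp
      ring)
    have heq : q + (1 - t) • (x - q) + ((1 - (1 - t)) * b) • (q - y) =
        x + t • (q + b • (q - y) - x) := by module
    have hwP : x + t • (q + b • (q - y) - x) ∈ relCore P := by
      have h := add_smul_sub_mem_relCore hP hxP hbP (t := 1 - t) (by linarith) (by linarith)
      convert h using 1
      module
    refine ⟨1 - t, by linarith, by linarith, minFace (x + t • (q + b • (q - y) - x)) C,
      ⟨hS.minFace_mem hC hwC, minFace_subset, fun he => ?_, ?_⟩, ?_⟩
    · exact hw (mem_relCore_of_subset_minFace hwC he.ge)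
    · exact ⟨_, mem_minFace_self hwC, hwP⟩
    · rw [heq]
      exact mem_minFace_self hwC
  have hxD : x ∉ D := fun h => hne (hDC.antisymm (hx D hDS h))
  have hqD : q ∉ D := fun h => hne (hmin D hDS hDC h hDint)
  rcases ht0.eq_or_lt with rfl | ht0
  · exact hqD (by simpa using hD)
  rcases ht1.eq_or_lt with rfl | ht1
  · exact hxD (by simpa using hD)
  · exact hxD ((hS.inter_face C hC D hDS).1.2 hxC hqC ⟨hDC hD, hD⟩
      (mem_openSegment_add_smul_sub x q ht0 ht1)).2

theorem IsSubdivision.exists_minimal_interior_cell (hS : IsSubdivision P S) (hC : C ∈ S)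
    (hqC : q ∈ C) (hint : (C ∩ relCore P).Nonempty) :
    ∃ D ∈ S, D ⊆ C ∧ q ∈ D ∧ (D ∩ relCore P).Nonempty ∧
      ∀ G ∈ S, G ⊆ D → q ∈ G → (G ∩ relCore P).Nonempty → G = D := by
  have hfin : {D | D ∈ S ∧ D ⊆ C ∧ q ∈ D ∧ (D ∩ relCore P).Nonempty}.Finite :=
    hS.finite.subset fun D hD => hD.1
  obtain ⟨D, ⟨hDS, hDC, hqD, hD⟩, hmin⟩ := hfin.exists_minimal ⟨C, hC, subset_rfl, hqC, hint⟩
  exact ⟨D, hDS, hDC, hqD, hD, fun G hG hGD hqG hGi =>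
    hGD.antisymm (hmin ⟨hG, hGD.trans hDC, hqG, hGi⟩ hGD)⟩

theorem IsSubdivision.exists_interior_cell_mem (hS : IsSubdivision P S) (hP : Convex ℝ P)
    (hx : x ∈ relCore P) (hq : q ∈ P) :
    ∃ C ∈ S, q ∈ C ∧ (C ∩ relCore P).Nonempty := by
  obtain ⟨C, ⟨hC, hint⟩, hqC⟩ : q ∈ ⋃₀ {C | C ∈ S ∧ (C ∩ relCore P).Nonempty} := by
    refine mem_sUnion_of_forall_pos (hS.finite.subset fun D hD => hD.1)
      (fun D hD => hS.poly D hD.1) q x fun t ht0 ht1 => ?_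
    have hw := add_smul_sub_mem_relCore hP hx hq ht0 ht1
    obtain ⟨C, hC, hwC⟩ := hS.cover.ge hw.1
    exact ⟨C, ⟨hC, _, hwC, hw⟩, hwC⟩
  exact ⟨C, hC, hqC, hint⟩

/-- Every interior trace of a cell on `P'` is the trace of an interior cell. -/
theorem IsSubdivision.exists_interior_cell_inter_eq (hS : IsSubdivision P S) (hP : Convex ℝ P)
    (hP' : Convex ℝ P') (hP'P : P' ⊆ P) (hx : x ∈ relCore P) (hC₀ : C₀ ∈ S)
    (hint : (C₀ ∩ P' ∩ relCore P').Nonempty) :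
    ∃ C ∈ S, (C ∩ relCore P).Nonempty ∧ C ∩ P' = C₀ ∩ P' := by
  obtain ⟨q, ⟨⟨hqC₀, -⟩, hqP'⟩, hq⟩ := hS.exists_generic_point hC₀
    ((hS.poly C₀ hC₀).convex.inter hP') Set.inter_subset_left hP' Set.inter_subset_right hint
  obtain ⟨C, hC, hqC, hCi⟩ := hS.exists_interior_cell_mem hP hx (hP'P hqP'.1)
  obtain ⟨D, hD, -, hqD, hDi, hmin⟩ := hS.exists_minimal_interior_cell hC hqC hCi
  refine ⟨D, hD, hDi, Set.Subset.antisymm (Set.subset_inter ?_ Set.inter_subset_right)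
    (Set.subset_inter (hq D hD hqD) Set.inter_subset_right)⟩
  exact hS.inter_subset_of_minimal hP hP'P hC₀ hqC₀ hqP' hD hqD hDi hmin

/-- An abstract isomorphism of tight-spans forces the trace map on interior cells to be
well-defined and injective. -/
theorem IsSubdivision.inter_injective_of_tightSpanIso (hS : IsSubdivision P S)
    (hP : Convex ℝ P) (hP' : Convex ℝ P') (hP'P : P' ⊆ P)
    (hiso : TightSpanIso P S P' (restrictSubdiv S P')) (hx : x ∈ relCore P) :
    (∀ C ∈ S, (C ∩ relCore P).Nonempty → (C ∩ P' ∩ relCore P').Nonempty) ∧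
    ∀ C ∈ S, ∀ D ∈ S, (C ∩ relCore P).Nonempty → (D ∩ relCore P).Nonempty →
      C ∩ P' = D ∩ P' → C = D := by
  obtain ⟨e, -⟩ := hiso
  have hlift : ∀ Q : {Q : Set E // Q ∈ restrictSubdiv S P' ∧ ¬ Q ⊆ relBoundary P'},
      ∃ C : {C : Set E // C ∈ S ∧ ¬ C ⊆ relBoundary P}, C.1 ∩ P' = Q.1 := by
    rintro ⟨_, ⟨C₀, hC₀, rfl⟩, hQ⟩
    obtain ⟨C, hC, hCi, he⟩ := hS.exists_interior_cell_inter_eq hP hP' hP'P hx hC₀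
      ((not_subset_relBoundary_iff hP' Set.inter_subset_right).1 hQ)
    exact ⟨⟨C, hC, (not_subset_relBoundary_iff hP (hS.subset hC)).2 hCi⟩, he⟩
  choose f hf using hlift
  have hfinj : Function.Injective f := fun Q Q' h => Subtype.ext (by rw [← hf Q, ← hf Q', h])
  have : Finite {C : Set E // C ∈ S ∧ ¬ C ⊆ relBoundary P} :=
    (hS.finite.subset fun C hC => hC.1 : {C | C ∈ S ∧ ¬ C ⊆ relBoundary P}.Finite)
  have hsurj : ∀ C ∈ S, (C ∩ relCore P).Nonempty → ∃ Q, (f Q).1 = C := by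
    intro C hC hCi
    obtain ⟨B, hB⟩ := Finite.surjective_of_injective (hfinj.comp e.injective)
      ⟨C, hC, (not_subset_relBoundary_iff hP (hS.subset hC)).2 hCi⟩
    exact ⟨e B, congrArg Subtype.val hB⟩
  refine ⟨fun C hC hCi => ?_, fun C hC D hD hCi hDi h => ?_⟩
  · obtain ⟨Q, rfl⟩ := hsurj C hC hCi
    rw [← not_subset_relBoundary_iff hP' Set.inter_subset_right, hf]
    exact Q.2.2
  · obtain ⟨Q, rfl⟩ := hsurj C hC hCi
    obtain ⟨Q', rfl⟩ := hsurj D hD hDi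
    rw [hf, hf] at h
    rw [Subtype.ext h]

/-- Every point of a cell of a coarsening lies in a cell of the finer subdivision contained in
that cell. -/
theorem Coarsens.exists_cell_subset (hco : Coarsens S S') (hS : IsSubdivision P S)
    (hS' : IsSubdivision P S') (hC : C ∈ S') (hx : x ∈ C) :
    ∃ D ∈ S, x ∈ D ∧ D ⊆ C := by
  obtain ⟨G, hG, hxG⟩ := hS.cover.ge (hS'.subset hC hx)
  have hF := hS.minFace_mem hG hxG
  obtain ⟨B, hB, hFB⟩ := hco _ hF
  have hxF := mem_minFace_self hxG
  exact ⟨_, hF, hxF, (subset_of_mem_relCore (hS'.inter_face B hB C hC).1 hFB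
    (mem_relCore_minFace hxG) ⟨hFB hxF, hx⟩).trans Set.inter_subset_right⟩

/-- The traces on `P'` determine the inclusion order on interior cells of a coarsening. -/
theorem Coarsens.subset_of_inter_subset (hco : Coarsens S S') (hS : IsSubdivision P S)
    (hS' : IsSubdivision P S') (hP : Convex ℝ P) (hP' : Convex ℝ P') (hP'P : P' ⊆ P)
    (hint : ∀ C ∈ S, (C ∩ relCore P).Nonempty → (C ∩ P' ∩ relCore P').Nonempty)
    (hinj : ∀ C ∈ S, ∀ D ∈ S, (C ∩ relCore P).Nonempty → (D ∩ relCore P).Nonempty →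
      C ∩ P' = D ∩ P' → C = D)
    (hC : C ∈ S') (hD : D ∈ S') (hCi : (C ∩ relCore P).Nonempty)
    (hDi : (D ∩ relCore P).Nonempty) (hCD : C ∩ P' ⊆ D) : C ⊆ D := by
  obtain ⟨x, ⟨hxC, hxP⟩, hx⟩ := hS'.exists_generic_point hC (hS'.poly C hC).convex subset_rfl hP
    (hS'.subset hC) hCi
  obtain ⟨A, hA, hxA, hAC⟩ := hco.exists_cell_subset hS hS' hC hxC
  have hAi : (A ∩ relCore P).Nonempty := ⟨x, hxA, hxP⟩
  obtain ⟨q, ⟨⟨hqA, -⟩, hqP'⟩, hq⟩ := hS.exists_generic_point hA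
    ((hS.poly A hA).convex.inter hP') Set.inter_subset_left hP' Set.inter_subset_right
    (hint A hA hAi)
  obtain ⟨z, hzD, hzP⟩ := hDi
  have hqD : q ∈ D := hCD ⟨hAC hqA, hqP'.1⟩
  obtain ⟨B, ⟨hB, hBD, hBi⟩, hqB⟩ :
      q ∈ ⋃₀ {B | B ∈ S ∧ B ⊆ D ∧ (B ∩ relCore P).Nonempty} := by
    refine mem_sUnion_of_forall_pos (hS.finite.subset fun D hD => hD.1)
      (fun D hD => hS.poly D hD.1) q z fun t ht0 ht1 => ?_
    have hw := add_smul_sub_mem_relCore hP hzP (hP'P hqP'.1) ht0 ht1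
    obtain ⟨B, hB, hwB, hBD⟩ := hco.exists_cell_subset hS hS' hD
      ((hS'.poly D hD).convex.add_smul_sub_mem_of_mem hzD hqD ht0.le ht1)
    exact ⟨B, ⟨hB, hBD, _, hwB, hw⟩, hwB⟩
  obtain ⟨G, hG, hGB, hqG, hGi, hmin⟩ := hS.exists_minimal_interior_cell hB hqB hBi
  have hGA : G = A := by
    refine hinj G hG A hA hGi hAi (Set.Subset.antisymm (Set.subset_inter ?_ Set.inter_subset_right)
      (Set.subset_inter (hq G hG hqG) Set.inter_subset_right))
    exact hS.inter_subset_of_minimal hP hP'P hA hqA hqP' hG hqG hGi hmin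
  exact hx D hD (hBD (hGB (hGA ▸ hxA)))

end Subdivisions

/-- Let `P'` be a subpolytope of a polytope `P` and `S` a subdivision of `P` whose
tight-span is isomorphic to that of `S|_{P'}`.  If `S'` is a subdivision of `P`
coarsening `S`, then the tight-spans of `S'` and `S'|_{P'}` are isomorphic. -/
theorem tightSpanIso_of_coarsening {E : Type*} [AddCommGroup E] [Module ℝ E]
    (P P' : Set E) (hP : IsPolytope P) (hP' : IsSubpolytope P' P)
    (S : Set (Set E)) (hS : IsSubdivision P S)
    (hiso : TightSpanIso P S P' (restrictSubdiv S P'))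
    (S' : Set (Set E)) (hS' : IsSubdivision P S') (hco : Coarsens S S') :
    TightSpanIso P S' P' (restrictSubdiv S' P') := by
  have hPc := hP.convex
  have hP'c : Convex ℝ P' := by
    obtain ⟨W, -, rfl⟩ := hP'
    exact convex_convexHull ℝ W
  have hP'P : P' ⊆ P := by
    obtain ⟨W, hW, rfl⟩ := hP'
    exact convexHull_min (fun w hw => (hW hw).1) hPc
  have hcore : (relCore P').Nonempty → (relCore P).Nonempty := by
    rintro ⟨q, hq⟩
    obtain ⟨C, hC, hqC⟩ := hS.cover.ge (hP'P hq.1)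
    obtain ⟨e, -⟩ := hiso
    let B := e.symm ⟨C ∩ P', ⟨C, hC, rfl⟩,
      (not_subset_relBoundary_iff hP'c Set.inter_subset_right).2 ⟨q, ⟨hqC, hq.1⟩, hq⟩⟩
    exact ((not_subset_relBoundary_iff hPc (hS.subset B.2.1)).1 B.2.2).mono
      Set.inter_subset_right
  have hmain : ∀ {x : E}, x ∈ relCore P →
      _ := fun hx => hS.inter_injective_of_tightSpanIso hPc hP'c hP'P hiso hx
  have htrace : ∀ C ∈ S', (C ∩ relCore P).Nonempty → (C ∩ P' ∩ relCore P').Nonempty := by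
    rintro C hC ⟨x, hxC, hx⟩
    obtain ⟨A, hA, hxA, hAC⟩ := hco.exists_cell_subset hS hS' hC hxC
    exact ((hmain hx).1 A hA ⟨x, hxA, hx⟩).mono
      (Set.inter_subset_inter_left _ (Set.inter_subset_inter_left _ hAC))
  have horder : ∀ C ∈ S', ∀ D ∈ S', (C ∩ relCore P).Nonempty → (D ∩ relCore P).Nonempty →
      C ∩ P' ⊆ D ∩ P' → C ⊆ D := by
    rintro C hC D hD hCi hDi h
    obtain ⟨hint, hinj⟩ := hmain hCi.some_mem.2
    exact hco.subset_of_inter_subset hS hS' hPc hP'c hP'P hint hinj hC hD hCi hDi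
      (h.trans Set.inter_subset_left)
  have hinterior : ∀ C : {C : Set E // C ∈ S' ∧ ¬ C ⊆ relBoundary P},
      (C.1 ∩ relCore P).Nonempty := fun C =>
    (not_subset_relBoundary_iff hPc (hS'.subset C.2.1)).1 C.2.2
  let g : {C : Set E // C ∈ S' ∧ ¬ C ⊆ relBoundary P} →
      {C : Set E // C ∈ restrictSubdiv S' P' ∧ ¬ C ⊆ relBoundary P'} := fun C =>
    ⟨C.1 ∩ P', ⟨C.1, C.2.1, rfl⟩, (not_subset_relBoundary_iff hP'c Set.inter_subset_right).2
      (htrace C.1 C.2.1 (hinterior C))⟩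
  have hg : ∀ C D, C.1 ⊆ D.1 ↔ (g C).1 ⊆ (g D).1 := fun C D =>
    ⟨Set.inter_subset_inter_left _,
      horder C.1 C.2.1 D.1 D.2.1 (hinterior C) (hinterior D)⟩
  refine ⟨Equiv.ofBijective g ⟨fun C D h => Subtype.ext ?_, ?_⟩, hg⟩
  · exact ((hg C D).2 (by rw [h])).antisymm ((hg D C).2 (by rw [h]))
  · rintro ⟨_, ⟨C₀, hC₀, rfl⟩, hQ⟩
    have hi := (not_subset_relBoundary_iff hP'c Set.inter_subset_right).1 hQ
    obtain ⟨x, hx⟩ := hcore (hi.mono Set.inter_subset_right)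
    obtain ⟨C, hC, hCi, he⟩ := hS'.exists_interior_cell_inter_eq hPc hP'c hP'P hx hC₀ hi
    exact ⟨⟨C, hC, (not_subset_relBoundary_iff hPc (hS'.subset hC)).2 hCi⟩, Subtype.ext he⟩
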